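/- arXiv:2212.10342 — 4 statements merged into one kernel-verified Lean document; each statement's English description precedes it below -/
import Mathlib

section
/- Let H be a real Hilbert space, F : ℝ → H differentiable, G : ℝ → H, and S, A : ℝ → B(H) with S(t) symmetric and A(t) antisymmetric for each t, and with t ↦ S(t) differentiable in operator norm with derivative S'(t). Suppose F'(t) = S(t)F(t) + A(t)F(t) + G(t) and F(t) ≠ 0, and define 𝒩(t) = -⟨S(t)F(t), F(t)⟩ / ‖F(t)‖². Then 𝒩 is differentiable at t and 𝒩'(t) ≤ ( -⟨S'(t)F(t), F(t)⟩ - 2⟨S(t)F(t), A(t)F(t)⟩ + (1/2)‖G(t)‖² ) / ‖F(t)‖². -/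
open RealInnerProductSpace

/-- Abstract Carleman-commutator derivative estimate for the frequency function:
with `F` differentiable, `F'(t) = S(t)F(t) + A(t)F(t) + G(t)`, `S(τ)` symmetric,
`A(τ)` antisymmetric, `τ ↦ S(τ)` differentiable in operator norm with derivative `S'`,
`F(t) ≠ 0`, and `𝒩(τ) = -⟨S(τ)F(τ), F(τ)⟩/‖F(τ)‖²`, the function `𝒩` is differentiable
at `t` and `𝒩'(t) ≤ (-⟨S'(t)F(t),F(t)⟩ - 2⟨S(t)F(t),A(t)F(t)⟩ + (1/2)‖G(t)‖²)/‖F(t)‖²`. -/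
theorem stmt_4 {H : Type*} [NormedAddCommGroup H] [InnerProductSpace ℝ H] [CompleteSpace H]
    (F G : ℝ → H) (S A : ℝ → H →L[ℝ] H) (S' : ℝ → H →L[ℝ] H)
    (hSsym : ∀ τ, ∀ x y : H, ⟪S τ x, y⟫ = ⟪x, S τ y⟫)
    (hAanti : ∀ τ, ∀ x y : H, ⟪A τ x, y⟫ = -⟪x, A τ y⟫)
    (hFdiff : Differentiable ℝ F)
    (hSdiff : ∀ τ, HasDerivAt S (S' τ) τ)
    (t : ℝ) (hF' : HasDerivAt F (S t (F t) + A t (F t) + G t) t) (hFt : F t ≠ 0)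
    (𝒩 : ℝ → ℝ) (h𝒩 : ∀ τ, 𝒩 τ = -⟪S τ (F τ), F τ⟫ / ‖F τ‖ ^ 2) :
    DifferentiableAt ℝ 𝒩 t ∧
    deriv 𝒩 t ≤
      (-⟪S' t (F t), F t⟫ - 2 * ⟪S t (F t), A t (F t)⟫ + (1 / 2) * ‖G t‖ ^ 2) / ‖F t‖ ^ 2 := by
  have hn : (0 : ℝ) < ‖F t‖ ^ 2 := by positivity
  have hSF : HasDerivAt (fun τ => S τ (F τ))
      (S' t (F t) + S t (S t (F t) + A t (F t) + G t)) t := (hSdiff t).clm_apply hF'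
  have h1 := (hSF.inner ℝ hF').neg
  have h2 := hF'.norm_sq
  have h3 := h1.div h2 hn.ne'
  have hN : 𝒩 = fun τ => -⟪S τ (F τ), F τ⟫ / ‖F τ‖ ^ 2 := funext h𝒩
  have h4 := h3.congr_of_eventuallyEq (f₁ := 𝒩)
    (Filter.Eventually.of_forall (fun τ => by rw [hN]; rfl))
  refine ⟨h4.differentiableAt, ?_⟩
  rw [h4.deriv, div_le_div_iff₀ (by positivity) hn]
  have hA0 : ⟪F t, A t (F t)⟫ = 0 := by
    have := hAanti t (F t) (F t)
    rw [real_inner_comm] at this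
    linarith
  have e1 : ⟪S t (S t (F t) + A t (F t) + G t), F t⟫
      = ⟪S t (F t), S t (F t)⟫ + ⟪S t (F t), A t (F t)⟫ + ⟪S t (F t), G t⟫ := by
    rw [hSsym, real_inner_comm, inner_add_right, inner_add_right]
  have hcs := real_inner_mul_inner_self_le (S t (F t) + (1 / 2 : ℝ) • G t) (F t)
  simp only [inner_add_left, inner_add_right, real_inner_smul_left, real_inner_smul_right] at hcs
  simp only [Pi.neg_apply, inner_add_left (S' t (F t)), inner_add_right, e1, hA0]
  rw [real_inner_comm (S t (F t)) (F t), ← real_inner_self_eq_norm_sq,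
    ← real_inner_self_eq_norm_sq] at *
  rw [real_inner_comm (G t) (F t)]
  rw [real_inner_comm (S t (F t)) (G t)] at hcs
  generalize ⟪F t, F t⟫ = n at *
  generalize ⟪S t (F t), S t (F t)⟫ = ss at *
  generalize ⟪S t (F t), G t⟫ = sg at *
  generalize ⟪S t (F t), F t⟫ = sf at *
  generalize ⟪G t, F t⟫ = gf at *
  generalize ⟪G t, G t⟫ = gg at *
  generalize ⟪S t (F t), A t (F t)⟫ = sa at *
  generalize ⟪S' t (F t), F t⟫ = d at *
  have key : -2 * ss * n - 2 * sg * n + 2 * sf * (sf + gf) ≤ 1 / 2 * gg * n := by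
    nlinarith [sq_nonneg gf]
  nlinarith [mul_le_mul_of_nonneg_right key hn.le]
end

section
/- Let T > 0, h > 0, C₀ > 0 and C ≥ 0. Let y : (0,T] → ℝ be differentiable with y(t) > 0 for all t, let 𝒩 : (0,T] → ℝ be differentiable, and let G : (0,T] → [0,∞) be continuous. Assume for all t ∈ (0,T]: (i) |(1/2)y'(t) + 𝒩(t)y(t)| ≤ G(t)·√(y(t)), and (ii) 𝒩'(t) ≤ (1+C₀)/(T-t+h) · 𝒩(t) + G(t)²/y(t) + C/h². Then for all 0 < t₁ < t₂ ≤ T: exp( 2𝒩(t₂) ∫_{t₁}^{t₂} ((T-t₂+h)/(T-t+h))^{1+C₀} dt ) ≤ ( y(t₁)/y(t₂) ) · exp( 2(t₂-t₁)²·C/h² + 2(t₂-t₁)∫_{t₁}^{t₂} G(t)²/y(t) dt ) · exp( 2∫_{t₁}^{t₂} G(t)/√(y(t)) dt ). -/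
/-- Backward interpolation step of the Carleman-commutator method: if `y > 0` is
differentiable on `(0,T]`, `𝒩` is differentiable on `(0,T]`, `G ≥ 0` is continuous on
`(0,T]`, and for all `t ∈ (0,T]` one has `|(1/2)y'(t) + 𝒩(t)y(t)| ≤ G(t)√(y(t))` and
`𝒩'(t) ≤ (1+C₀)/(T-t+h)·𝒩(t) + G(t)²/y(t) + C/h²`, then for all `0 < t₁ < t₂ ≤ T`,
`exp(2𝒩(t₂)∫_{t₁}^{t₂}((T-t₂+h)/(T-t+h))^{1+C₀} dt)
  ≤ (y(t₁)/y(t₂))·exp(2(t₂-t₁)²C/h² + 2(t₂-t₁)∫_{t₁}^{t₂}G²/y dt)·exp(2∫_{t₁}^{t₂}G/√y dt)`. -/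
theorem stmt_5 (T h C₀ C : ℝ) (hT : 0 < T) (hh : 0 < h) (hC₀ : 0 < C₀) (hC : 0 ≤ C)
    (y y' 𝒩 𝒩' G : ℝ → ℝ)
    (hy : ∀ t ∈ Set.Ioc (0 : ℝ) T, HasDerivAt y (y' t) t)
    (hypos : ∀ t ∈ Set.Ioc (0 : ℝ) T, 0 < y t)
    (h𝒩 : ∀ t ∈ Set.Ioc (0 : ℝ) T, HasDerivAt 𝒩 (𝒩' t) t)
    (hGcont : ContinuousOn G (Set.Ioc (0 : ℝ) T))
    (hGpos : ∀ t ∈ Set.Ioc (0 : ℝ) T, 0 ≤ G t)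
    (hi : ∀ t ∈ Set.Ioc (0 : ℝ) T,
      |(1 / 2) * y' t + 𝒩 t * y t| ≤ G t * Real.sqrt (y t))
    (hii : ∀ t ∈ Set.Ioc (0 : ℝ) T,
      𝒩' t ≤ (1 + C₀) / (T - t + h) * 𝒩 t + G t ^ 2 / y t + C / h ^ 2) :
    ∀ t₁ t₂ : ℝ, 0 < t₁ → t₁ < t₂ → t₂ ≤ T →
      Real.exp (2 * 𝒩 t₂ * ∫ t in t₁..t₂, ((T - t₂ + h) / (T - t + h)) ^ (1 + C₀)) ≤
        (y t₁ / y t₂) *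
          Real.exp (2 * (t₂ - t₁) ^ 2 * C / h ^ 2 +
            2 * (t₂ - t₁) * ∫ t in t₁..t₂, G t ^ 2 / y t) *
          Real.exp (2 * ∫ t in t₁..t₂, G t / Real.sqrt (y t)) := by
  intro t₁ t₂ h1 h12 h2T
  have hsub : Set.Icc t₁ t₂ ⊆ Set.Ioc (0 : ℝ) T := fun x hx =>
    ⟨lt_of_lt_of_le h1 hx.1, hx.2.trans h2T⟩
  have hyc : ContinuousOn y (Set.Icc t₁ t₂) := fun x hx =>
    (hy x (hsub hx)).continuousAt.continuousWithinAt
  have hNc : ContinuousOn 𝒩 (Set.Icc t₁ t₂) := fun x hx =>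
    (h𝒩 x (hsub hx)).continuousAt.continuousWithinAt
  have hGc : ContinuousOn G (Set.Icc t₁ t₂) := hGcont.mono hsub
  have hg2 : ContinuousOn (fun t => G t ^ 2 / y t) (Set.Icc t₁ t₂) :=
    (hGc.pow 2).div hyc (fun x hx => (hypos x (hsub hx)).ne')
  have hg1 : ContinuousOn (fun t => G t / Real.sqrt (y t)) (Set.Icc t₁ t₂) :=
    hGc.div hyc.sqrt (fun x hx => (Real.sqrt_pos.2 (hypos x (hsub hx))).ne')
  have hpos : ∀ t ∈ Set.Icc t₁ t₂, 0 < T - t + h := fun t ht => by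
    have := ht.2
    linarith
  have hlin : ContinuousOn (fun t : ℝ => T - t + h) (Set.Icc t₁ t₂) := by fun_prop
  have hr : ContinuousOn (fun t => ((T - t₂ + h) / (T - t + h)) ^ (1 + C₀)) (Set.Icc t₁ t₂) := by
    refine (continuousOn_const.div hlin (fun x hx => (hpos x hx).ne')).rpow_const ?_
    intro x hx
    right
    linarith
  set I2 := ∫ t in t₁..t₂, G t ^ 2 / y t with hI2
  set A := I2 + C / h ^ 2 * (t₂ - t₁) with hA
  have hK : 0 ≤ C / h ^ 2 := by positivity
  -- lower bound on the frequency function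
  have key : ∀ t ∈ Set.Ioo t₁ t₂,
      ((T - t₂ + h) / (T - t + h)) ^ (1 + C₀) * 𝒩 t₂ - A ≤ 𝒩 t := by
    intro t ht
    have hs' : Set.Icc t t₂ ⊆ Set.Icc t₁ t₂ := Set.Icc_subset_Icc_left ht.1.le
    have htm : t ∈ Set.Icc t₁ t₂ := ⟨ht.1.le, ht.2.le⟩
    have ht2m : t₂ ∈ Set.Icc t₁ t₂ := ⟨h12.le, le_rfl⟩
    have hpt := hpos t htm
    have hpt2 := hpos t₂ ht2m
    have hw : 0 < (T - t + h) ^ (1 + C₀) := Real.rpow_pos_of_pos hpt _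
    have hder : ∀ x ∈ Set.Icc t₁ t₂, HasDerivAt (fun s => (T - s + h) ^ (1 + C₀) * 𝒩 s)
        ((T - x + h) ^ (1 + C₀) * (𝒩' x - (1 + C₀) / (T - x + h) * 𝒩 x)) x := by
      intro x hx
      have hpx := hpos x hx
      have d1 : HasDerivAt (fun s : ℝ => T - s + h) (-1) x := by
        simpa using ((hasDerivAt_id x).const_sub T).add_const h
      have d2 := (d1.rpow_const (p := 1 + C₀) (Or.inl hpx.ne')).mul (h𝒩 x (hsub hx))
      refine d2.congr_deriv ?_
      have e : (T - x + h) ^ (1 + C₀) = (T - x + h) ^ (1 + C₀ - 1) * (T - x + h) := by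
        rw [← Real.rpow_add_one hpx.ne']
        congr 1
        ring
      rw [e]
      field_simp
      ring
    have hfc : ContinuousOn (fun s => G s ^ 2 / y s + C / h ^ 2) (Set.Icc t t₂) :=
      (hg2.mono hs').add continuousOn_const
    have main := intervalIntegral.sub_le_integral_of_hasDeriv_right_of_le (a := t) (b := t₂)
      (g := fun s => (T - s + h) ^ (1 + C₀) * 𝒩 s)
      (g' := fun x => (T - x + h) ^ (1 + C₀) * (𝒩' x - (1 + C₀) / (T - x + h) * 𝒩 x))
      (φ := fun s => (T - t + h) ^ (1 + C₀) * (G s ^ 2 / y s + C / h ^ 2)) ht.2.le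
      (fun x hx => (hder x (hs' hx)).continuousAt.continuousWithinAt)
      (fun x hx => (hder x (hs' ⟨hx.1.le, hx.2.le⟩)).hasDerivWithinAt)
      ((continuousOn_const.mul hfc).integrableOn_Icc)
      (by
        intro x hx
        have hxm := hs' ⟨hx.1.le, hx.2.le⟩
        have hpx := hpos x hxm
        have h2 := hii x (hsub hxm)
        have hyx := hypos x (hsub hxm)
        have hle : (T - x + h) ^ (1 + C₀) ≤ (T - t + h) ^ (1 + C₀) :=
          Real.rpow_le_rpow hpx.le (by linarith [hx.1]) (by linarith)
        calc (T - x + h) ^ (1 + C₀) * (𝒩' x - (1 + C₀) / (T - x + h) * 𝒩 x)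
            ≤ (T - x + h) ^ (1 + C₀) * (G x ^ 2 / y x + C / h ^ 2) :=
              mul_le_mul_of_nonneg_left (by linarith) (Real.rpow_nonneg hpx.le _)
          _ ≤ _ := mul_le_mul_of_nonneg_right hle (by positivity))
    have hint2 : IntervalIntegrable (fun s => G s ^ 2 / y s) MeasureTheory.volume t t₂ :=
      (hg2.mono hs').intervalIntegrable_of_Icc ht.2.le
    have hint1 : IntervalIntegrable (fun s => G s ^ 2 / y s) MeasureTheory.volume t₁ t :=
      (hg2.mono (Set.Icc_subset_Icc_right ht.2.le)).intervalIntegrable_of_Icc ht.1.le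
    rw [intervalIntegral.integral_const_mul,
      intervalIntegral.integral_add hint2 intervalIntegrable_const,
      intervalIntegral.integral_const, smul_eq_mul] at main
    have hsplit := intervalIntegral.integral_add_adjacent_intervals hint1 hint2
    have hnn : 0 ≤ ∫ s in t₁..t, G s ^ 2 / y s := by
      refine intervalIntegral.integral_nonneg ht.1.le (fun u hu => ?_)
      have := hypos u (hsub ⟨hu.1, hu.2.trans ht.2.le⟩)
      positivity
    have hAle : (∫ s in t..t₂, G s ^ 2 / y s) + (t₂ - t) * (C / h ^ 2) ≤ A := by
      rw [hA]
      have : (t₂ - t) * (C / h ^ 2) ≤ (t₂ - t₁) * (C / h ^ 2) :=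
        mul_le_mul_of_nonneg_right (by linarith [ht.1]) hK
      linarith
    have m2 := main.trans (mul_le_mul_of_nonneg_left hAle hw.le)
    rw [Real.div_rpow hpt2.le hpt.le, div_mul_eq_mul_div, sub_le_iff_le_add,
      div_le_iff₀ hw]
    linarith
  have hint1 := hg1.intervalIntegrable_of_Icc (μ := MeasureTheory.volume) h12.le
  have hintr := hr.intervalIntegrable_of_Icc (μ := MeasureTheory.volume) h12.le
  have hφc : ContinuousOn (fun t => (-2 * 𝒩 t₂) * ((T - t₂ + h) / (T - t + h)) ^ (1 + C₀) + 2 * A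
      + 2 * (G t / Real.sqrt (y t))) (Set.Icc t₁ t₂) :=
    ((continuousOn_const.mul hr).add continuousOn_const).add (continuousOn_const.mul hg1)
  have main := intervalIntegral.sub_le_integral_of_hasDeriv_right_of_le (a := t₁) (b := t₂)
    (g := fun s => Real.log (y s)) (g' := fun x => y' x / y x)
    (φ := fun t => (-2 * 𝒩 t₂) * ((T - t₂ + h) / (T - t + h)) ^ (1 + C₀) + 2 * A
      + 2 * (G t / Real.sqrt (y t))) h12.le
    (hyc.log (fun x hx => (hypos x (hsub hx)).ne'))
    (fun x hx => ((hy x (hsub ⟨hx.1.le, hx.2.le⟩)).log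
      (hypos x (hsub ⟨hx.1.le, hx.2.le⟩)).ne').hasDerivWithinAt)
    hφc.integrableOn_Icc
    (by
      intro x hx
      have hxm := hsub ⟨hx.1.le, hx.2.le⟩
      have hyx := hypos x hxm
      have h3 := (abs_le.1 (hi x hxm)).2
      have hk := key x hx
      have hs := Real.sqrt_pos.2 hyx
      have hsq : Real.sqrt (y x) * Real.sqrt (y x) = y x := Real.mul_self_sqrt hyx.le
      have h4 : y' x / y x ≤ -2 * 𝒩 x + 2 * (G x / Real.sqrt (y x)) := by
        rw [div_le_iff₀ hyx]
        have : G x / Real.sqrt (y x) * y x = G x * Real.sqrt (y x) := by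
          rw [div_mul_eq_mul_div, div_eq_iff hs.ne', mul_assoc, hsq]
        have e : (-2 * 𝒩 x + 2 * (G x / Real.sqrt (y x))) * y x
            = -2 * (𝒩 x * y x) + 2 * (G x / Real.sqrt (y x) * y x) := by ring
        rw [e, this]
        linarith
      linarith)
  rw [intervalIntegral.integral_add ((hintr.const_mul _).add intervalIntegrable_const)
      (hint1.const_mul _),
    intervalIntegral.integral_add (hintr.const_mul _) intervalIntegrable_const,
    intervalIntegral.integral_const, smul_eq_mul,
    intervalIntegral.integral_const_mul, intervalIntegral.integral_const_mul] at main
  have hy1 := hypos t₁ (hsub ⟨le_rfl, h12.le⟩)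
  have hy2 := hypos t₂ (hsub ⟨h12.le, le_rfl⟩)
  rw [← Real.exp_log (div_pos hy1 hy2), ← Real.exp_add, ← Real.exp_add, Real.exp_le_exp,
    Real.log_div hy1.ne' hy2.ne']
  have e : (t₂ - t₁) * (2 * A) = 2 * (t₂ - t₁) ^ 2 * C / h ^ 2 + 2 * (t₂ - t₁) * I2 := by
    rw [hA]
    ring
  rw [e] at main
  linarith
end

section
/- Let T > 0, h > 0, C₀ > 0 and C ≥ 0. Let y : (0,T] → ℝ be differentiable with y(t) > 0 for all t, let 𝒩 : (0,T] → ℝ be differentiable, and let G : (0,T] → [0,∞) be continuous. Assume for all t ∈ (0,T]: (i) |(1/2)y'(t) + 𝒩(t)y(t)| ≤ G(t)·√(y(t)), and (ii) 𝒩'(t) ≤ (1+C₀)/(T-t+h) · 𝒩(t) + G(t)²/y(t) + C/h². Then for all 0 < t₁ < t₂ < t₃ ≤ T, one has the logarithmic convexity estimate y(t₂)^{1+M} ≤ y(t₁)^{M} · y(t₃) · e^{2D}, where M = ( ∫_{t₂}^{t₃} (T-t+h)^{-(1+C₀)} dt ) / ( ∫_{t₁}^{t₂} (T-t+h)^{-(1+C₀)}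 dt ) and D = M(t₂-t₁)²·C/h² + 2M(t₂-t₁)∫_{t₁}^{t₂} G(t)²/y(t) dt + ( ∫_{t₂}^{t₃} ((T-t₂+h)/(T-t+h))^{1+C₀} dt )·( ∫_{t₂}^{t₃} ( C/h² + G(t)²/y(t) ) dt ) + M∫_{t₁}^{t₂} G(t)/√(y(t)) dt + ∫_{t₂}^{t₃} G(t)/√(y(t)) dt. -/
/-- Three-point logarithmic convexity inequality: under the two differential inequalities
for `y`, `𝒩`, `G` on `(0,T]`, for all `0 < t₁ < t₂ < t₃ ≤ T` one has
`y(t₂)^{1+M} ≤ y(t₁)^M · y(t₃) · e^{2D}` with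
`M = (∫_{t₂}^{t₃}(T-t+h)^{-(1+C₀)} dt)/(∫_{t₁}^{t₂}(T-t+h)^{-(1+C₀)} dt)` and
`D = M(t₂-t₁)²C/h² + 2M(t₂-t₁)∫_{t₁}^{t₂}G²/y dt
    + (∫_{t₂}^{t₃}((T-t₂+h)/(T-t+h))^{1+C₀} dt)·(∫_{t₂}^{t₃}(C/h² + G²/y) dt)
    + M∫_{t₁}^{t₂}G/√y dt + ∫_{t₂}^{t₃}G/√y dt`. -/
theorem stmt_6 (T h C₀ C : ℝ) (hT : 0 < T) (hh : 0 < h) (hC₀ : 0 < C₀) (hC : 0 ≤ C)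
    (y y' 𝒩 𝒩' G : ℝ → ℝ)
    (hy : ∀ t ∈ Set.Ioc (0 : ℝ) T, HasDerivAt y (y' t) t)
    (hypos : ∀ t ∈ Set.Ioc (0 : ℝ) T, 0 < y t)
    (h𝒩 : ∀ t ∈ Set.Ioc (0 : ℝ) T, HasDerivAt 𝒩 (𝒩' t) t)
    (hGcont : ContinuousOn G (Set.Ioc (0 : ℝ) T))
    (hGpos : ∀ t ∈ Set.Ioc (0 : ℝ) T, 0 ≤ G t)
    (hi : ∀ t ∈ Set.Ioc (0 : ℝ) T,
      |(1 / 2) * y' t + 𝒩 t * y t| ≤ G t * Real.sqrt (y t))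
    (hii : ∀ t ∈ Set.Ioc (0 : ℝ) T,
      𝒩' t ≤ (1 + C₀) / (T - t + h) * 𝒩 t + G t ^ 2 / y t + C / h ^ 2) :
    ∀ t₁ t₂ t₃ : ℝ, 0 < t₁ → t₁ < t₂ → t₂ < t₃ → t₃ ≤ T →
      ∀ M D : ℝ,
        M = (∫ t in t₂..t₃, (T - t + h) ^ (-(1 + C₀))) /
              (∫ t in t₁..t₂, (T - t + h) ^ (-(1 + C₀))) →
        D = M * (t₂ - t₁) ^ 2 * C / h ^ 2 +
              2 * M * (t₂ - t₁) * (∫ t in t₁..t₂, G t ^ 2 / y t) +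
              (∫ t in t₂..t₃, ((T - t₂ + h) / (T - t + h)) ^ (1 + C₀)) *
                (∫ t in t₂..t₃, (C / h ^ 2 + G t ^ 2 / y t)) +
              M * (∫ t in t₁..t₂, G t / Real.sqrt (y t)) +
              (∫ t in t₂..t₃, G t / Real.sqrt (y t)) →
        y t₂ ^ (1 + M) ≤ y t₁ ^ M * y t₃ * Real.exp (2 * D) := by
  intro t₁ t₂ t₃ h1 h12 h23 h3 M D hM hD
  have key := @intervalIntegral.sub_le_integral_of_hasDeriv_right_of_le
  set p := 1 + C₀ with hp
  have hp0 : 0 < p := by linarith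
  set K := C / h ^ 2 with hK
  have hK0 : 0 ≤ K := by positivity
  have hw : ∀ t ∈ Set.Ioc (0 : ℝ) T, 0 < T - t + h := fun t ht => by linarith [ht.2]
  have hsub : ∀ a b, 0 < a → b ≤ T → Set.Icc a b ⊆ Set.Ioc (0 : ℝ) T :=
    fun a b ha hb t ht => ⟨lt_of_lt_of_le ha ht.1, ht.2.trans hb⟩
  have hyc : ContinuousOn y (Set.Ioc 0 T) :=
    fun t ht => (hy t ht).continuousAt.continuousWithinAt
  have hNc : ContinuousOn 𝒩 (Set.Ioc 0 T) :=
    fun t ht => (h𝒩 t ht).continuousAt.continuousWithinAt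
  have hwc : ContinuousOn (fun t => T - t + h) (Set.Ioc 0 T) := by fun_prop
  have hwp : ∀ q : ℝ, ContinuousOn (fun t => (T - t + h) ^ q) (Set.Ioc 0 T) :=
    fun q => hwc.rpow_const (fun t ht => Or.inl (hw t ht).ne')
  have hgc : ContinuousOn (fun t => G t ^ 2 / y t) (Set.Ioc 0 T) :=
    (hGcont.pow 2).div hyc (fun t ht => (hypos t ht).ne')
  have hsc : ContinuousOn (fun t => G t / Real.sqrt (y t)) (Set.Ioc 0 T) :=
    hGcont.div (Real.continuous_sqrt.comp_continuousOn hyc)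
      (fun t ht => (Real.sqrt_pos.2 (hypos t ht)).ne')
  have hg0 : ∀ t ∈ Set.Ioc (0 : ℝ) T, 0 ≤ G t ^ 2 / y t :=
    fun t ht => div_nonneg (sq_nonneg _) (hypos t ht).le
  have hKgc : ContinuousOn (fun t => K + G t ^ 2 / y t) (Set.Ioc 0 T) :=
    continuousOn_const.add hgc
  have hInt : ∀ (f : ℝ → ℝ), ContinuousOn f (Set.Ioc 0 T) → ∀ a b, 0 < a → a ≤ b → b ≤ T →
      IntervalIntegrable f MeasureTheory.volume a b := fun f hf a b ha hab hb =>
    (hf.mono (by rw [Set.uIcc_of_le hab]; exact hsub a b ha hb)).intervalIntegrable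
  have hIntOn : ∀ (f : ℝ → ℝ), ContinuousOn f (Set.Ioc 0 T) → ∀ a b, 0 < a → b ≤ T →
      MeasureTheory.IntegrableOn f (Set.Icc a b) := fun f hf a b ha hb =>
    (hf.mono (hsub a b ha hb)).integrableOn_Icc
  -- step 1
  have step1 : ∀ a b, 0 < a → a ≤ b → b ≤ T →
      𝒩 b * (T - b + h) ^ p - 𝒩 a * (T - a + h) ^ p ≤
        (T - a + h) ^ p * ∫ t in a..b, (K + G t ^ 2 / y t) := by
    intro a b ha hab hb
    rw [← intervalIntegral.integral_const_mul]
    refine key (g := fun t => 𝒩 t * (T - t + h) ^ p)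
      (g' := fun t => 𝒩' t * (T - t + h) ^ p + 𝒩 t * (-1 * p * (T - t + h) ^ (p - 1))) hab
      ((hNc.mul (hwp p)).mono (hsub a b ha hb)) ?_
      (hIntOn _ (continuousOn_const.mul hKgc) a b ha hb) ?_
    · intro t ht
      have ht' := hsub a b ha hb (Set.Ioo_subset_Icc_self ht)
      have hd : HasDerivAt (fun t => T - t + h) (-1) t := by
        simpa using ((hasDerivAt_id t).const_sub T).add_const h
      exact ((h𝒩 t ht').mul (hd.rpow_const (Or.inl (hw t ht').ne'))).hasDerivWithinAt
    · intro t ht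
      have ht' := hsub a b ha hb (Set.Ioo_subset_Icc_self ht)
      have hwt := hw t ht'
      have e : (T - t + h) ^ (p - 1) = (T - t + h) ^ p / (T - t + h) := by
        rw [Real.rpow_sub hwt, Real.rpow_one]
      have hP : 0 < (T - t + h) ^ p := Real.rpow_pos_of_pos hwt p
      have hle : (T - t + h) ^ p ≤ (T - a + h) ^ p :=
        Real.rpow_le_rpow hwt.le (by linarith [ht.1]) hp0.le
      have h2 := hii t ht'
      have hn : 0 ≤ K + G t ^ 2 / y t := add_nonneg hK0 (hg0 t ht')
      calc _ = (𝒩' t - p / (T - t + h) * 𝒩 t) * (T - t + h) ^ p := by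
              simp only [e]; field_simp; ring
        _ ≤ (K + G t ^ 2 / y t) * (T - t + h) ^ p :=
              mul_le_mul_of_nonneg_right (by linarith) hP.le
        _ ≤ _ := by rw [mul_comm]; exact mul_le_mul_of_nonneg_right hle hn
  have hmono : ∀ a b c d, 0 < a → a ≤ c → c ≤ d → d ≤ b → b ≤ T →
      (∫ t in c..d, (K + G t ^ 2 / y t)) ≤ ∫ t in a..b, (K + G t ^ 2 / y t) := by
    intro a b c d ha hac hcd hdb hb
    refine intervalIntegral.integral_mono_interval hac hcd hdb ?_
      (hInt _ hKgc a b ha (by linarith) hb)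
    refine (MeasureTheory.ae_restrict_iff' measurableSet_Ioc).2 (Filter.Eventually.of_forall ?_)
    intro t ht
    have ht' := hsub a b ha hb (Set.Ioc_subset_Icc_self ht)
    exact add_nonneg hK0 (hg0 t ht')
  have hlog : ∀ t ∈ Set.Ioc (0 : ℝ) T, HasDerivAt (fun t => Real.log (y t)) (y' t / y t) t :=
    fun t ht => (hy t ht).log (hypos t ht).ne'
  have hlogc : ContinuousOn (fun t => Real.log (y t)) (Set.Ioc 0 T) :=
    fun t ht => (hlog t ht).continuousAt.continuousWithinAt
  have hi' : ∀ t ∈ Set.Ioc (0 : ℝ) T,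
      |(1 / 2) * (y' t / y t) + 𝒩 t| ≤ G t / Real.sqrt (y t) := by
    intro t ht
    have hy0 := hypos t ht
    have hs := Real.sqrt_pos.2 hy0
    have e1 : (1 / 2) * (y' t / y t) + 𝒩 t = ((1 / 2) * y' t + 𝒩 t * y t) / y t := by
      field_simp
    have e2 : G t / Real.sqrt (y t) = G t * Real.sqrt (y t) / y t := by
      rw [div_eq_div_iff hs.ne' hy0.ne', mul_assoc, Real.mul_self_sqrt hy0.le]
    rw [e1, e2, abs_div, abs_of_pos hy0]
    exact div_le_div_of_nonneg_right (hi t ht) hy0.le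
  have h2T : t₂ ≤ T := by linarith
  have h2 : 0 < t₂ := by linarith
  have hw2 : 0 < T - t₂ + h := by linarith
  set W := (T - t₂ + h) ^ p with hW
  have hW0 : 0 < W := Real.rpow_pos_of_pos hw2 p
  set A := ∫ t in t₁..t₂, (T - t + h) ^ (-p) with hA
  set B := ∫ t in t₂..t₃, (T - t + h) ^ (-p) with hB
  have hApos : 0 < A := by
    refine intervalIntegral.intervalIntegral_pos_of_pos_on (hInt _ (hwp _) _ _ h1 h12.le h2T) ?_ h12
    intro t ht
    exact Real.rpow_pos_of_pos (by linarith [ht.2]) _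
  have hBpos : 0 < B := by
    refine intervalIntegral.intervalIntegral_pos_of_pos_on (hInt _ (hwp _) _ _ h2 h23.le h3) ?_ h23
    intro t ht
    exact Real.rpow_pos_of_pos (by linarith [ht.2]) _
  have hM0 : 0 < M := by rw [hM]; positivity
  have hMA : M * A = B := by rw [hM]; field_simp
  have hE : (∫ t in t₂..t₃, ((T - t₂ + h) / (T - t + h)) ^ p) = W * B := by
    rw [hB, ← intervalIntegral.integral_const_mul]
    refine intervalIntegral.integral_congr ?_
    intro t ht
    rw [Set.uIcc_of_le h23.le] at ht
    have hwt : 0 < T - t + h := by linarith [ht.2]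
    simp only
    rw [Real.div_rpow hw2.le hwt.le, Real.rpow_neg hwt.le]
    rfl
  set I1 := ∫ t in t₁..t₂, (K + G t ^ 2 / y t) with hI1
  set I2 := ∫ t in t₂..t₃, (K + G t ^ 2 / y t) with hI2
  set S1 := ∫ t in t₁..t₂, G t / Real.sqrt (y t) with hS1
  set S2 := ∫ t in t₂..t₃, G t / Real.sqrt (y t) with hS2
  set J := ∫ t in t₁..t₂, G t ^ 2 / y t with hJ
  have hJ0 : 0 ≤ J := intervalIntegral.integral_nonneg h12.le
    (fun t ht => hg0 t (hsub t₁ t₂ h1 h2T ht))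
  have hI1J : I1 = (t₂ - t₁) * K + J := by
    rw [hI1, intervalIntegral.integral_add (by simp) (hInt _ hgc _ _ h1 h12.le h2T),
      intervalIntegral.integral_const, smul_eq_mul]
  have first : (1 / 2) * Real.log (y t₂) - (1 / 2) * Real.log (y t₁) ≤
      (t₂ - t₁) * I1 - 𝒩 t₂ * W * A + S1 := by
    have e : (∫ t in t₁..t₂, ((I1 - 𝒩 t₂ * W * (T - t + h) ^ (-p)) + G t / Real.sqrt (y t)))
        = (t₂ - t₁) * I1 - 𝒩 t₂ * W * A + S1 := by
      have c1 : ContinuousOn (fun t => 𝒩 t₂ * W * (T - t + h) ^ (-p)) (Set.Ioc 0 T) :=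
        continuousOn_const.mul (hwp _)
      have c2 : ContinuousOn (fun t => I1 - 𝒩 t₂ * W * (T - t + h) ^ (-p)) (Set.Ioc 0 T) :=
        continuousOn_const.sub c1
      rw [intervalIntegral.integral_add
        (hInt _ c2 _ _ h1 h12.le h2T)
        (hInt _ hsc _ _ h1 h12.le h2T), intervalIntegral.integral_sub (by simp)
        (hInt _ c1 _ _ h1 h12.le h2T),
        intervalIntegral.integral_const_mul, intervalIntegral.integral_const, smul_eq_mul]
    rw [← e]
    refine key (g := fun t => (1 / 2) * Real.log (y t))
      (g' := fun t => (1 / 2) * (y' t / y t)) h12.le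
      ((continuousOn_const.mul hlogc).mono (hsub _ _ h1 h2T)) ?_
      (hIntOn _ ((continuousOn_const.sub (continuousOn_const.mul (hwp _))).add hsc) _ _ h1 h2T) ?_
    · intro t ht
      exact ((hlog t (hsub _ _ h1 h2T (Set.Ioo_subset_Icc_self ht))).const_mul _).hasDerivWithinAt
    · intro t ht
      have ht' := hsub _ _ h1 h2T (Set.Ioo_subset_Icc_self ht)
      have hwt := hw t ht'
      have hP : 0 < (T - t + h) ^ p := Real.rpow_pos_of_pos hwt p
      have a1 := (abs_le.1 (hi' t ht')).2
      have a2 := step1 t t₂ ht'.1 ht.2.le h2T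
      have a3 := mul_le_mul_of_nonneg_left
        (hmono t₁ t₂ t t₂ h1 ht.1.le ht.2.le le_rfl h2T) hP.le
      have a4 : 𝒩 t₂ * W * (T - t + h) ^ (-p) ≤ I1 + 𝒩 t := by
        rw [Real.rpow_neg hwt.le, ← div_eq_mul_inv, div_le_iff₀ hP]
        linarith
      linarith
  have second : -((1 / 2) * Real.log (y t₃)) - -((1 / 2) * Real.log (y t₂)) ≤
      (𝒩 t₂ + I2) * W * B + S2 := by
    have e : (∫ t in t₂..t₃, ((𝒩 t₂ + I2) * W * (T - t + h) ^ (-p) + G t / Real.sqrt (y t)))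
        = (𝒩 t₂ + I2) * W * B + S2 := by
      have c1 : ContinuousOn (fun t => (𝒩 t₂ + I2) * W * (T - t + h) ^ (-p)) (Set.Ioc 0 T) :=
        continuousOn_const.mul (hwp _)
      rw [intervalIntegral.integral_add
        (hInt _ c1 _ _ h2 h23.le h3)
        (hInt _ hsc _ _ h2 h23.le h3), intervalIntegral.integral_const_mul]
    rw [← e]
    refine key (g := fun t => -((1 / 2) * Real.log (y t)))
      (g' := fun t => -((1 / 2) * (y' t / y t))) h23.le
      ((continuousOn_const.mul hlogc).neg.mono (hsub _ _ h2 h3)) ?_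
      (hIntOn _ ((continuousOn_const.mul (hwp _)).add hsc) _ _ h2 h3) ?_
    · intro t ht
      exact ((hlog t
        (hsub _ _ h2 h3 (Set.Ioo_subset_Icc_self ht))).const_mul _).neg.hasDerivWithinAt
    · intro t ht
      have ht' := hsub _ _ h2 h3 (Set.Ioo_subset_Icc_self ht)
      have hwt := hw t ht'
      have hP : 0 < (T - t + h) ^ p := Real.rpow_pos_of_pos hwt p
      have a1 := (abs_le.1 (hi' t ht')).1
      have a2 := step1 t₂ t h2 ht.1.le ht'.2
      have a3 := mul_le_mul_of_nonneg_left
        (hmono t₂ t₃ t₂ t h2 le_rfl ht.1.le ht.2.le h3) hW0.le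
      have a4 : 𝒩 t ≤ (𝒩 t₂ + I2) * W * (T - t + h) ^ (-p) := by
        rw [Real.rpow_neg hwt.le, ← div_eq_mul_inv, le_div_iff₀ hP]
        linarith
      linarith
  have y1 := hypos t₁ ⟨h1, by linarith⟩
  have y2 := hypos t₂ ⟨h2, h2T⟩
  have y3 := hypos t₃ ⟨by linarith, h3⟩
  have final : (1 + M) * Real.log (y t₂) ≤ M * Real.log (y t₁) + Real.log (y t₃) + 2 * D := by
    have f1 := mul_le_mul_of_nonneg_left first hM0.le
    have e1 : M * (𝒩 t₂ * W * A) = 𝒩 t₂ * W * B := by rw [← hMA]; ring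
    have e2 : 0 ≤ M * (t₂ - t₁) * J :=
      mul_nonneg (mul_nonneg hM0.le (by linarith)) hJ0
    have e3 : M * (t₂ - t₁) ^ 2 * C / h ^ 2 = M * (t₂ - t₁) ^ 2 * K := by rw [hK]; ring
    rw [e3, hE] at hD
    rw [hI1J] at f1
    rw [hD]
    linarith
  rw [Real.rpow_def_of_pos y2, Real.rpow_def_of_pos y1]
  nth_rewrite 1 [← Real.exp_log y3]
  rw [← Real.exp_add, ← Real.exp_add]
  exact Real.exp_le_exp.2 (by linarith)
end

section
/- Let A, B, r > 0 with A ≤ B, let K ≥ 1, and let M, C₁, C₂ > 0. Suppose that for every h > 0 one has A^{1+M} ≤ K·e^{C₁/h}·B^{M}·r + K·e^{-C₂/h}·B^{1+M}. Then A^{(1+M)(1 + C₁/C₂)} ≤ (2K)^{1 + C₁/C₂} · B^{M + (1+M)C₁/C₂} · r. -/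
/-- Abstract parameter-optimization lemma: if for every `h > 0`,
`A^{1+M} ≤ K·e^{C₁/h}·B^{M}·r + K·e^{-C₂/h}·B^{1+M}`, then
`A^{(1+M)(1+C₁/C₂)} ≤ (2K)^{1+C₁/C₂} · B^{M+(1+M)C₁/C₂} · r`. -/
theorem stmt_9 (A B r K M C₁ C₂ : ℝ) (hA : 0 < A) (hB : 0 < B) (hr : 0 < r)
    (hAB : A ≤ B) (hK : 1 ≤ K) (hM : 0 < M) (hC₁ : 0 < C₁) (hC₂ : 0 < C₂)
    (H : ∀ h : ℝ, 0 < h →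
      A ^ (1 + M) ≤ K * Real.exp (C₁ / h) * B ^ M * r + K * Real.exp (-C₂ / h) * B ^ (1 + M)) :
    A ^ ((1 + M) * (1 + C₁ / C₂)) ≤ (2 * K) ^ (1 + C₁ / C₂) * B ^ (M + (1 + M) * C₁ / C₂) * r := by
  have hP : 0 < A ^ (1 + M) := Real.rpow_pos_of_pos hA _
  have hQ : 0 < B ^ (1 + M) := Real.rpow_pos_of_pos hB _
  have hPQ : A ^ (1 + M) ≤ B ^ (1 + M) := Real.rpow_le_rpow hA.le hAB (by linarith)
  have hBM : 0 < B ^ M := Real.rpow_pos_of_pos hB _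
  have e1 : A ^ ((1 + M) * (1 + C₁ / C₂)) = A ^ (1 + M) * (A ^ (1 + M)) ^ (C₁ / C₂) := by
    rw [Real.rpow_mul hA.le, Real.rpow_add hP, Real.rpow_one]
  have e2 : B ^ (M + (1 + M) * C₁ / C₂) = B ^ M * (B ^ (1 + M)) ^ (C₁ / C₂) := by
    rw [mul_div_assoc, Real.rpow_add hB, Real.rpow_mul hB.le]
  have hK2 : 0 < 2 * K := by linarith
  have e3 : (2 * K) ^ (1 + C₁ / C₂) = 2 * K * (2 * K) ^ (C₁ / C₂) := by
    rw [Real.rpow_add hK2, Real.rpow_one]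
  rw [e1, e2, e3]
  generalize A ^ (1 + M) = P at *
  generalize B ^ (1 + M) = Q at *
  have hX1 : 1 < 2 * K * Q / P := by
    rw [lt_div_iff₀ hP]
    nlinarith
  have hX0 : 0 < 2 * K * Q / P := by linarith
  have hL : 0 < Real.log (2 * K * Q / P) := Real.log_pos hX1
  have h1 := H (C₂ / Real.log (2 * K * Q / P)) (by positivity)
  have a1 : C₁ / (C₂ / Real.log (2 * K * Q / P)) = Real.log (2 * K * Q / P) * (C₁ / C₂) := by
    field_simp
  have a2 : -C₂ / (C₂ / Real.log (2 * K * Q / P)) = -Real.log (2 * K * Q / P) := by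
    field_simp
  rw [a1, a2, ← Real.rpow_def_of_pos hX0, Real.exp_neg, Real.exp_log hX0] at h1
  have a3 : K * (2 * K * Q / P)⁻¹ * Q = P / 2 := by
    have : K ≠ 0 := by linarith
    field_simp
  rw [a3, Real.div_rpow (by positivity) hP.le, Real.mul_rpow hK2.le hQ.le] at h1
  have hPs : 0 < P ^ (C₁ / C₂) := Real.rpow_pos_of_pos hP _
  generalize P ^ (C₁ / C₂) = p at *
  generalize Q ^ (C₁ / C₂) = q at *
  generalize (2 * K) ^ (C₁ / C₂) = k at *
  have h2 : P ≤ 2 * (K * (k * q / p) * B ^ M * r) := by linarith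
  calc P * p ≤ 2 * (K * (k * q / p) * B ^ M * r) * p := mul_le_mul_of_nonneg_right h2 hPs.le
    _ = 2 * K * k * (B ^ M * q) * r := by field_simp
end
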